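/- arXiv:2202.09024 — 2 statements merged into one kernel-verified Lean document; each statement's English description precedes it below -/
import Mathlib

section
/- Let n ≥ 1, let w_0 be an integer, let w_1 and w_2 be non-zero integers, and let T ⊆ {1,…,n} with |T| = t ≤ n/2. Define f : {-1,1}^n → {-1,1} by f(x) = sgn(w_0 + w_1·Σ_{u∈T} x_u + w_2·Σ_{v∉T} x_v). Let S_1 = {(i,j) : 0 ≤ i ≤ t−1, 0 ≤ j ≤ n−t, and −|w_1| ≤ w_0 + w_1(2i−(t−1)) + w_2(2j−(n−t)) < |w_1|} and S_2 = {(i,j) : 0 ≤ i ≤ t, 0 ≤ j ≤ n−t−1, and −|w_2| ≤ w_0 + w_1(2i−t) + w_2(2j−(n−t−1)) < |w_2|}. Then W^(1)[f] = (t/2^{2n−2}) · [Σ_{(i,j)∈S_1} C(t−1,i)·C(n−t,j)]² + ((n−t)/2^{2n−2}) · [Σ_{(i,j)∈S_2} C(t,i)·C(n−t−1,j)]². -/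
/-!
Toggling bit `i` of a linear threshold function can only raise its value or only lower it, according
to the sign of the weight `w i`. Hence the degree-one coefficient at `i` is, up to that sign, the
proportion of settings of the other bits at which bit `i` is pivotal, that is, at which the
remaining affine form lands in `[-|w i|, |w i|)`, half-open because `sgn 0 = 1`. When the weights
take only two values, this form depends only on the number of bits set to `1` in each of the two
blocks, so the pivotal settings are counted by products of binomial coefficients.
-/

open Finset

namespace BKS

/-- sign function: 1 if z ≥ 0, -1 otherwise. -/
noncomputable def sgn (z : ℝ) : ℝ := if 0 ≤ z then 1 else -1

/-- encode Bool as the ±1 value of a bit. -/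
def chi (b : Bool) : ℝ := if b then 1 else -1

/-- Fourier coefficient of f at S. -/
noncomputable def fourierCoeff {n : ℕ} (f : (Fin n → Bool) → ℝ) (S : Finset (Fin n)) : ℝ :=
  (1 / 2 ^ n : ℝ) * ∑ x : Fin n → Bool, f x * ∏ i ∈ S, chi (x i)

/-- Fourier weight of f at level k: W^(k)[f]. -/
noncomputable def fourierWeight {n : ℕ} (k : ℕ) (f : (Fin n → Bool) → ℝ) : ℝ :=
  ∑ S ∈ Finset.univ.filter (fun S : Finset (Fin n) => S.card = k), (fourierCoeff f S) ^ 2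

/-- Noise stability of f at ρ. -/
noncomputable def noiseStab {n : ℕ} (ρ : ℝ) (f : (Fin n → Bool) → ℝ) : ℝ :=
  ∑ k ∈ Finset.range (n + 1), ρ ^ k * fourierWeight k f

/-- Majority function on n bits. -/
noncomputable def Maj (n : ℕ) : (Fin n → Bool) → ℝ := fun x => sgn (∑ i, chi (x i))

/-- The function g_n(x) = sgn(2(x_1 + ⋯ + x_{n-3}) + x_{n-2} + x_{n-1} + x_n). -/
noncomputable def gfun (n : ℕ) : (Fin n → Bool) → ℝ :=
  fun x => sgn (∑ i : Fin n, (if (i : ℕ) < n - 3 then (2 : ℝ) else 1) * chi (x i))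

/-- f is a linear threshold function. -/
def IsLTF {n : ℕ} (f : (Fin n → Bool) → ℝ) : Prop :=
  ∃ (w0 : ℝ) (w : Fin n → ℝ), ∀ x, f x = sgn (w0 + ∑ i, w i * chi (x i))

section Powerset

variable {ι : Type*} [DecidableEq ι]

theorem sum_union_ite_mem_mul {R : Type*} [NonUnitalNonAssocSemiring R] {A B T : Finset ι}
    (hA : A ⊆ T) (hB : Disjoint B T) (a b : R) (y : ι → R) :
    ∑ j ∈ A ∪ B, (if j ∈ T then a else b) * y j = a * ∑ j ∈ A, y j + b * ∑ j ∈ B, y j := by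
  rw [sum_union (hB.mono_right hA).symm, mul_sum, mul_sum]
  congr 1
  · exact sum_congr rfl fun j hj => by rw [if_pos (hA hj)]
  · exact sum_congr rfl fun j hj => by rw [if_neg (disjoint_left.1 hB hj)]

theorem sum_powerset_union {M : Type*} [AddCommMonoid M] {A B : Finset ι} (hAB : Disjoint A B)
    (g : Finset ι → Finset ι → M) :
    ∑ U ∈ (A ∪ B).powerset, g (U ∩ A) (U ∩ B) = ∑ P ∈ A.powerset, ∑ Q ∈ B.powerset, g P Q := by
  rw [← sum_product']
  refine sum_nbij' (fun U => (U ∩ A, U ∩ B)) (fun p => p.1 ∪ p.2) ?_ ?_ ?_ ?_ fun _ _ => rfl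
  · simp
  · rintro ⟨P, Q⟩ hPQ
    rw [mem_product, mem_powerset, mem_powerset] at hPQ
    exact mem_powerset.2 (union_subset_union hPQ.1 hPQ.2)
  · intro U hU
    rw [← inter_union_distrib_left, inter_eq_left.2 (mem_powerset.1 hU)]
  · rintro ⟨P, Q⟩ hPQ
    simp only [mem_product, mem_powerset] at hPQ
    have hQA : Disjoint Q A := (hAB.mono_right hPQ.2).symm
    have hPB : Disjoint P B := hAB.mono_left hPQ.1
    simp only [union_inter_distrib_right, inter_eq_left.2 hPQ.1, inter_eq_left.2 hPQ.2,
      disjoint_iff_inter_eq_empty.1 hQA, disjoint_iff_inter_eq_empty.1 hPB, union_empty,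
      empty_union]

theorem sum_powerset_union_apply_card {M : Type*} [AddCommMonoid M] {A B : Finset ι}
    (hAB : Disjoint A B) (g : ℕ → ℕ → M) :
    ∑ U ∈ (A ∪ B).powerset, g #(U ∩ A) #(U ∩ B) =
      ∑ p ∈ range (#A + 1) ×ˢ range (#B + 1), ((#A).choose p.1 * (#B).choose p.2) • g p.1 p.2 := by
  rw [sum_powerset_union hAB fun P Q => g #P #Q, sum_product]
  simp only [sum_powerset_apply_card (g _),
    sum_powerset_apply_card fun i => ∑ j ∈ range (#B + 1), (#B).choose j • g i j, mul_smul,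
    ← smul_sum]

theorem card_filter_powerset_union {A B : Finset ι} (hAB : Disjoint A B) (P : ℕ → ℕ → Prop)
    [∀ i j, Decidable (P i j)] :
    #{U ∈ (A ∪ B).powerset | P #(U ∩ A) #(U ∩ B)} =
      ∑ p ∈ range (#A + 1) ×ˢ range (#B + 1) with P p.1 p.2,
        (#A).choose p.1 * (#B).choose p.2 := by
  rw [card_filter, sum_powerset_union_apply_card hAB fun i j => if P i j then 1 else 0, sum_filter]
  simp only [smul_eq_mul, mul_ite, mul_one, mul_zero]

end Powerset

section Cube

variable {ι : Type*} [DecidableEq ι]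

/-- The point of the Boolean cube whose bits equal to `true`, that is to `1` under `chi`, are those
in `U`. Cube points are encoded this way so that sums over the cube become sums over powersets. -/
def cubePoint (U : Finset ι) (j : ι) : Bool := decide (j ∈ U)

theorem sum_cube_eq_sum_cubePoint [Fintype ι] {M : Type*} [AddCommMonoid M]
    (g : (ι → Bool) → M) : ∑ x, g x = ∑ U : Finset ι, g (cubePoint U) := by
  refine (Fintype.sum_bijective cubePoint ?_ _ _ fun _ => rfl).symm
  refine ⟨fun U V hUV => ?_, fun x => ⟨univ.filter (x ·), ?_⟩⟩
  · ext j
    simpa [cubePoint] using congrFun hUV j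
  · ext j
    simp [cubePoint]

theorem sum_cube_eq_sum_powerset_erase [Fintype ι] {M : Type*} [AddCommMonoid M]
    (g : (ι → Bool) → M) (i : ι) :
    ∑ x, g x = ∑ U ∈ (univ.erase i).powerset,
      (g (cubePoint U) + g (cubePoint (insert i U))) := by
  rw [sum_cube_eq_sum_cubePoint, ← powerset_univ, ← insert_erase (mem_univ i),
    sum_powerset_insert (notMem_erase i univ), sum_add_distrib, insert_erase (mem_univ i)]

theorem chi_cubePoint_of_mem {U : Finset ι} {j : ι} (hj : j ∈ U) : chi (cubePoint U j) = 1 := by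
  simp [chi, cubePoint, hj]

theorem chi_cubePoint_of_notMem {U : Finset ι} {j : ι} (hj : j ∉ U) :
    chi (cubePoint U j) = -1 := by
  simp [chi, cubePoint, hj]

theorem sum_chi_cubePoint (U A : Finset ι) :
    ∑ j ∈ A, chi (cubePoint U j) = 2 * (#(U ∩ A) : ℝ) - #A := by
  have hchi (j : ι) : chi (cubePoint U j) = 2 * (if j ∈ U then 1 else 0) - 1 := by
    by_cases hj : j ∈ U
    · rw [chi_cubePoint_of_mem hj, if_pos hj]
      norm_num
    · rw [chi_cubePoint_of_notMem hj, if_neg hj]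
      norm_num
  simp only [hchi, sum_sub_distrib, ← mul_sum, sum_ite_mem, inter_comm A U, sum_const,
    nsmul_eq_mul, mul_one]

theorem sum_mul_chi_cubePoint_insert {s : Finset ι} {i : ι} (hi : i ∈ s) (w : ι → ℝ)
    (U : Finset ι) :
    ∑ j ∈ s, w j * chi (cubePoint (insert i U) j) =
      ∑ j ∈ s.erase i, w j * chi (cubePoint U j) + w i := by
  rw [← sum_erase_add s _ hi, chi_cubePoint_of_mem (mem_insert_self i U), mul_one]
  congr 1
  refine sum_congr rfl fun j hj => ?_
  simp [cubePoint, ne_of_mem_erase hj]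

theorem sum_mul_chi_cubePoint_of_notMem {s U : Finset ι} {i : ι} (hi : i ∈ s) (hiU : i ∉ U)
    (w : ι → ℝ) :
    ∑ j ∈ s, w j * chi (cubePoint U j) =
      ∑ j ∈ s.erase i, w j * chi (cubePoint U j) - w i := by
  rw [← sum_erase_add s _ hi, chi_cubePoint_of_notMem hiU, mul_neg_one, sub_eq_add_neg]

end Cube

theorem sgn_sq (z : ℝ) : sgn z ^ 2 = 1 := by
  unfold sgn
  split_ifs <;> norm_num

theorem sgn_add_sub_sgn_sub (z a : ℝ) :
    sgn (z + a) - sgn (z - a) = 2 * sgn a * if z ∈ Set.Ico (-|a|) |a| then 1 else 0 := by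
  unfold sgn
  rcases le_or_gt 0 a with ha | ha
  · rw [abs_of_nonneg ha]
    split_ifs <;> grind
  · rw [abs_of_neg ha]
    split_ifs <;> grind

section Fourier

variable {n : ℕ}

theorem fourierWeight_one (f : (Fin n → Bool) → ℝ) :
    fourierWeight 1 f = ∑ i, fourierCoeff f {i} ^ 2 := by
  rw [fourierWeight, ← powerset_univ, ← powersetCard_eq_filter, powersetCard_one, sum_map]
  rfl

theorem fourierCoeff_singleton (f : (Fin n → Bool) → ℝ) (i : Fin n) :
    fourierCoeff f {i} = 1 / 2 ^ n *
      ∑ U ∈ (univ.erase i).powerset, (f (cubePoint (insert i U)) - f (cubePoint U)) := by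
  simp only [fourierCoeff, prod_singleton]
  rw [sum_cube_eq_sum_powerset_erase _ i]
  congr 1
  refine sum_congr rfl fun U hU => ?_
  have hiU : i ∉ U := fun hi => notMem_erase i univ (mem_powerset.1 hU hi)
  rw [chi_cubePoint_of_notMem hiU, chi_cubePoint_of_mem (mem_insert_self i U)]
  ring

theorem fourierCoeff_singleton_of_ltf {f : (Fin n → Bool) → ℝ} {c : ℝ} {w : Fin n → ℝ}
    (hf : ∀ x, f x = sgn (c + ∑ j, w j * chi (x j))) (i : Fin n) :
    fourierCoeff f {i} = sgn (w i) *
      #{U ∈ (univ.erase i).powerset |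
        c + ∑ j ∈ univ.erase i, w j * chi (cubePoint U j) ∈ Set.Ico (-|w i|) |w i|} /
      2 ^ (n - 1) := by
  have hdiff : ∀ U ∈ (univ.erase i).powerset, f (cubePoint (insert i U)) - f (cubePoint U) =
      2 * sgn (w i) * if c + ∑ j ∈ univ.erase i, w j * chi (cubePoint U j) ∈
        Set.Ico (-|w i|) |w i| then 1 else 0 := by
    intro U hU
    have hiU : i ∉ U := fun hi => notMem_erase i univ (mem_powerset.1 hU hi)
    rw [hf, hf, sum_mul_chi_cubePoint_insert (mem_univ i),
      sum_mul_chi_cubePoint_of_notMem (mem_univ i) hiU, ← add_assoc, ← add_sub_assoc,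
      sgn_add_sub_sgn_sub]
  rw [fourierCoeff_singleton, sum_congr rfl hdiff, ← mul_sum, sum_boole,
    ← mul_pow_sub_one i.pos.ne' (2 : ℝ)]
  field_simp

/-- The pairs `(p, q)` for which a bit of weight `r` is pivotal when, among the other bits, `p` of
the `k` bits of weight `a` and `q` of the `l` bits of weight `b` are equal to `1`; here `c` is the
constant term of the threshold function. This is the common form of the sets `S_1` and `S_2`. -/
noncomputable def pivotalLevels (c a b r : ℝ) (k l : ℕ) : Finset (ℕ × ℕ) :=
  {p ∈ range (k + 1) ×ˢ range (l + 1) |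
    c + a * (2 * (p.1 : ℝ) - k) + b * (2 * (p.2 : ℝ) - l) ∈ Set.Ico (-|r|) |r|}

theorem fourierCoeff_singleton_sq_of_two_weights {f : (Fin n → Bool) → ℝ} {w0 w1 w2 : ℝ}
    {T : Finset (Fin n)}
    (hf : ∀ x, f x = sgn (w0 + w1 * ∑ u ∈ T, chi (x u) + w2 * ∑ v ∈ Tᶜ, chi (x v))) (i : Fin n) :
    fourierCoeff f {i} ^ 2 =
      (∑ p ∈ pivotalLevels w0 w1 w2 (if i ∈ T then w1 else w2) #(T.erase i) #(Tᶜ.erase i),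
        ((#(T.erase i)).choose p.1 * (#(Tᶜ.erase i)).choose p.2 : ℝ)) ^ 2 /
        2 ^ (2 * n - 2) := by
  have hltf (x : Fin n → Bool) : f x = sgn (w0 + ∑ j, (if j ∈ T then w1 else w2) * chi (x j)) := by
    rw [hf, ← union_compl T, sum_union_ite_mem_mul Subset.rfl disjoint_compl_left, add_assoc]
  have hothers : univ.erase i = T.erase i ∪ Tᶜ.erase i := by
    rw [← erase_union_distrib, union_compl]
  have hdisj : Disjoint (T.erase i) (Tᶜ.erase i) :=
    disjoint_compl_right.mono (erase_subset i T) (erase_subset i Tᶜ)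
  have hform (U : Finset (Fin n)) :
      w0 + ∑ j ∈ univ.erase i, (if j ∈ T then w1 else w2) * chi (cubePoint U j) =
        w0 + w1 * (2 * (#(U ∩ T.erase i) : ℝ) - #(T.erase i)) +
          w2 * (2 * (#(U ∩ Tᶜ.erase i) : ℝ) - #(Tᶜ.erase i)) := by
    rw [hothers, sum_union_ite_mem_mul (erase_subset i T)
      (disjoint_compl_left.mono_left (erase_subset i Tᶜ)), sum_chi_cubePoint, sum_chi_cubePoint,
      add_assoc]
  have hpow : ((2 : ℝ) ^ (n - 1)) ^ 2 = 2 ^ (2 * n - 2) := by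
    rw [← pow_mul, Nat.sub_mul, one_mul, mul_comm]
  rw [fourierCoeff_singleton_of_ltf hltf, div_pow, mul_pow, sgn_sq, one_mul, hpow]
  simp only [hform]
  rw [hothers, card_filter_powerset_union hdisj fun p q =>
    w0 + w1 * (2 * (p : ℝ) - #(T.erase i)) + w2 * (2 * (q : ℝ) - #(Tᶜ.erase i)) ∈
      Set.Ico (-|if i ∈ T then w1 else w2|) |if i ∈ T then w1 else w2|]
  push_cast
  rfl

end Fourier

theorem stmt2_general {n : ℕ} (w0 w1 w2 : ℝ) (T : Finset (Fin n)) (t : ℕ) (ht : #T = t)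
    (f : (Fin n → Bool) → ℝ)
    (hf : ∀ x, f x = sgn (w0 + w1 * ∑ u ∈ T, chi (x u) + w2 * ∑ v ∈ Tᶜ, chi (x v)))
    (S1 S2 : Finset (ℕ × ℕ))
    (hS1 : S1 = {p ∈ range t ×ˢ range (n - t + 1) |
      -|w1| ≤ w0 + w1 * (2 * (p.1 : ℝ) - (t - 1)) + w2 * (2 * (p.2 : ℝ) - (n - t)) ∧
      w0 + w1 * (2 * (p.1 : ℝ) - (t - 1)) + w2 * (2 * (p.2 : ℝ) - (n - t)) < |w1|})
    (hS2 : S2 = {p ∈ range (t + 1) ×ˢ range (n - t) |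
      -|w2| ≤ w0 + w1 * (2 * (p.1 : ℝ) - t) + w2 * (2 * (p.2 : ℝ) - (n - t - 1)) ∧
      w0 + w1 * (2 * (p.1 : ℝ) - t) + w2 * (2 * (p.2 : ℝ) - (n - t - 1)) < |w2|}) :
    fourierWeight 1 f =
      ((t : ℝ) / 2 ^ (2 * n - 2)) *
        (∑ p ∈ S1, (((t - 1).choose p.1 : ℝ) * ((n - t).choose p.2 : ℝ))) ^ 2 +
      (((n : ℝ) - t) / 2 ^ (2 * n - 2)) *
        (∑ p ∈ S2, ((t.choose p.1 : ℝ) * ((n - t - 1).choose p.2 : ℝ))) ^ 2 := by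
  subst hS1 hS2
  have htn : t ≤ n := ht ▸ card_finset_fin_le T
  have hTc : #Tᶜ = n - t := by rw [card_compl, Fintype.card_fin, ht]
  rw [fourierWeight_one, ← sum_add_sum_compl T]
  congr 1
  · rw [sum_eq_card_nsmul fun i hi => ?_, ht, nsmul_eq_mul, div_mul_eq_mul_div, mul_div_assoc]
    have ht_pos : 1 ≤ t := ht ▸ card_pos.2 ⟨i, hi⟩
    rw [fourierCoeff_singleton_sq_of_two_weights hf, if_pos hi, card_erase_of_mem hi,
      erase_eq_of_notMem (by simpa using hi), ht, hTc]
    simp only [pivotalLevels, Set.mem_Ico, Nat.sub_add_cancel ht_pos, Nat.cast_sub ht_pos,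
      Nat.cast_sub htn, Nat.cast_one]
  · rw [sum_eq_card_nsmul fun i hi => ?_, hTc, nsmul_eq_mul, Nat.cast_sub htn,
      div_mul_eq_mul_div, mul_div_assoc]
    have htn_pos : 1 ≤ n - t := hTc ▸ card_pos.2 ⟨i, hi⟩
    rw [fourierCoeff_singleton_sq_of_two_weights hf, if_neg (mem_compl.1 hi),
      card_erase_of_mem hi, erase_eq_of_notMem (mem_compl.1 hi), ht, hTc]
    simp only [pivotalLevels, Set.mem_Ico, Nat.sub_add_cancel htn_pos, Nat.cast_sub htn_pos,
      Nat.cast_sub htn, Nat.cast_one]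

open Classical in
theorem stmt2 (n : ℕ) (hn : 1 ≤ n) (w0 w1 w2 : ℤ) (hw1 : w1 ≠ 0) (hw2 : w2 ≠ 0)
    (T : Finset (Fin n)) (t : ℕ) (ht : T.card = t) (htn : 2 * t ≤ n)
    (f : (Fin n → Bool) → ℝ)
    (hf : ∀ x, f x = sgn ((w0 : ℝ) + (w1 : ℝ) * ∑ u ∈ T, chi (x u)
      + (w2 : ℝ) * ∑ v ∈ Tᶜ, chi (x v)))
    (S1 S2 : Finset (ℕ × ℕ))
    (hS1 : S1 = (Finset.range t ×ˢ Finset.range (n - t + 1)).filter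
      (fun p =>
        -|w1| ≤ w0 + w1 * (2 * (p.1 : ℤ) - ((t : ℤ) - 1)) + w2 * (2 * (p.2 : ℤ) - ((n : ℤ) - t)) ∧
        w0 + w1 * (2 * (p.1 : ℤ) - ((t : ℤ) - 1)) + w2 * (2 * (p.2 : ℤ) - ((n : ℤ) - t)) < |w1|))
    (hS2 : S2 = (Finset.range (t + 1) ×ˢ Finset.range (n - t)).filter
      (fun p =>
        -|w2| ≤ w0 + w1 * (2 * (p.1 : ℤ) - t) + w2 * (2 * (p.2 : ℤ) - ((n : ℤ) - t - 1)) ∧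
        w0 + w1 * (2 * (p.1 : ℤ) - t) + w2 * (2 * (p.2 : ℤ) - ((n : ℤ) - t - 1)) < |w2|)) :
    fourierWeight 1 f =
      ((t : ℝ) / 2 ^ (2 * n - 2)) *
        (∑ p ∈ S1, (((t - 1).choose p.1 : ℝ) * ((n - t).choose p.2 : ℝ))) ^ 2 +
      (((n : ℝ) - t) / 2 ^ (2 * n - 2)) *
        (∑ p ∈ S2, ((t.choose p.1 : ℝ) * ((n - t - 1).choose p.2 : ℝ))) ^ 2 := by
  refine stmt2_general w0 w1 w2 T t ht f hf S1 S2 (hS1.trans ?_) (hS2.trans ?_) <;>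
    exact filter_congr fun _ _ => by norm_cast

end BKS
end

section
/- For every odd n ≥ 5, there exists a linear threshold function f : {-1,1}^n → {-1,1} and a ρ ∈ (0,1) such that Stab_ρ(f) < Stab_ρ(Maj_n). -/
/-!
Let `n = 2s + 3`, let `p_s = C(2s, s) / 4^s` be the probability that `2s` random votes are tied, and
let `f = gfun n`, the majority of the first `2s` bits with ties broken by the majority of the last
three. Both `f` and `Maj n` have mean zero, so their noise stabilities at small `ρ` are ordered as
their Fourier weights at level one. Pinning a bit `x_i` shows that the degree-one coefficient of a
majority is the probability that this vote is decisive, with weight one half when it only makes or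
breaks a tie. As `f` is a sum of two tensor products, its coefficients are `p_s` (`2s` times) and
`p_s / 2` (three times), while all `2s + 3` coefficients of `Maj n` are
`p_{s+1} = p_s (2s + 1) / (2s + 2)`. Hence the claim is that
`2s + 3/4 < (2s + 3) (2s + 1)² / (2s + 2)²`, which holds exactly when `s > 0`.
-/

open Finset

namespace BKS

theorem chi_not (b : Bool) : chi (!b) = -chi b := by cases b <;> simp [chi]

theorem sgn_of_nonneg {z : ℝ} (hz : 0 ≤ z) : sgn z = 1 := if_pos hz

theorem sgn_of_neg {z : ℝ} (hz : z < 0) : sgn z = -1 := if_neg hz.not_ge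

theorem sgn_of_ne_zero {z : ℝ} (hz : z ≠ 0) : sgn z = Real.sign z := by
  rcases hz.lt_or_gt with h | h
  · rw [sgn_of_neg h, Real.sign_of_neg h]
  · rw [sgn_of_nonneg h.le, Real.sign_of_pos h]

theorem centralBinom_succ_div_four_pow (s : ℕ) :
    ((s + 1).centralBinom / 4 ^ (s + 1) : ℝ) =
      (2 * s + 1) / (2 * s + 2) * (s.centralBinom / 4 ^ s) := by
  have recurrence : ((s : ℝ) + 1) * (s + 1).centralBinom = 2 * (2 * s + 1) * s.centralBinom :=
    mod_cast s.succ_mul_centralBinom_succ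
  field_simp
  linear_combination 4 ^ s * 2 * recurrence

section FourierCoeff

variable {m k n : ℕ}

theorem fourierCoeff_add (f g : (Fin n → Bool) → ℝ) (S : Finset (Fin n)) :
    fourierCoeff (f + g) S = fourierCoeff f S + fourierCoeff g S := by
  simp only [fourierCoeff, Pi.add_apply, add_mul, sum_add_distrib, mul_add]

theorem fourierCoeff_one_empty : fourierCoeff (1 : (Fin n → Bool) → ℝ) ∅ = 1 := by
  simp [fourierCoeff]

theorem fourierCoeff_comp_not (f : (Fin n → Bool) → ℝ) (S : Finset (Fin n)) :
    fourierCoeff (fun x => f fun i => !x i) S = (-1) ^ #S * fourierCoeff f S := by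
  have flip : ∑ x : Fin n → Bool, f (fun i => !x i) * ∏ i ∈ S, chi (x i) =
      ∑ x : Fin n → Bool, f x * ∏ i ∈ S, chi (!x i) :=
    Fintype.sum_equiv (Equiv.piCongrRight fun _ => Equiv.boolNot) _ _ fun x => by
      simp [show (fun i => !x i) = Equiv.piCongrRight (fun _ => Equiv.boolNot) x from rfl]
  simp only [fourierCoeff, flip, chi_not, prod_neg, mul_sum]
  exact sum_congr rfl fun x _ => by ring

theorem fourierCoeff_eq_zero_of_odd {f : (Fin n → Bool) → ℝ} (hf : ∀ x, f (fun i => !x i) = -f x)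
    {S : Finset (Fin n)} (hS : Even #S) : fourierCoeff f S = 0 := by
  have flip := fourierCoeff_comp_not f S
  have neg : fourierCoeff (fun x => -f x) S = -fourierCoeff f S := by simp [fourierCoeff]
  rw [funext hf, neg, hS.neg_one_pow] at flip
  linarith

theorem fourierCoeff_one_eq_zero_of_odd_card {S : Finset (Fin n)} (hS : Odd #S) :
    fourierCoeff (1 : (Fin n → Bool) → ℝ) S = 0 := by
  have flip : fourierCoeff 1 S = _ := fourierCoeff_comp_not 1 S
  rw [hS.neg_one_pow] at flip
  linarith

theorem sum_insertNth_bool (i : Fin (n + 1)) (F : (Fin (n + 1) → Bool) → ℝ) :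
    ∑ x, F x =
      ∑ y : Fin n → Bool, F (i.insertNth true y) + ∑ y : Fin n → Bool, F (i.insertNth false y) := by
  rw [← (Fin.insertNthEquiv (fun _ => Bool) i).sum_comp, Fintype.sum_prod_type, Fintype.sum_bool]
  rfl

theorem fourierCoeff_empty_eq_insertNth (f : (Fin (n + 1) → Bool) → ℝ) (i : Fin (n + 1)) :
    fourierCoeff f ∅ = (fourierCoeff (fun y => f (i.insertNth true y)) ∅ +
      fourierCoeff (fun y => f (i.insertNth false y)) ∅) / 2 := by
  simp only [fourierCoeff, prod_empty, mul_one, sum_insertNth_bool i f, pow_succ]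
  ring

theorem fourierCoeff_singleton_eq_insertNth (f : (Fin (n + 1) → Bool) → ℝ) (i : Fin (n + 1)) :
    fourierCoeff f {i} = (fourierCoeff (fun y => f (i.insertNth true y)) ∅ -
      fourierCoeff (fun y => f (i.insertNth false y)) ∅) / 2 := by
  simp only [fourierCoeff, prod_singleton, prod_empty, sum_insertNth_bool i,
    Fin.insertNth_apply_same, chi, if_true, Bool.false_eq_true, if_false, ← sum_mul, pow_succ]
  ring

/-- The tensor product `f ⊗ g` of functions on two cubes, as a function on the product cube whose
first `m` bits are read by `f` and last `k` bits by `g`. -/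
def boxMul (f : (Fin m → Bool) → ℝ) (g : (Fin k → Bool) → ℝ) : (Fin (m + k) → Bool) → ℝ :=
  fun x => f (fun i => x (Fin.castAdd k i)) * g (fun j => x (Fin.natAdd m j))

theorem fourierCoeff_boxMul (f : (Fin m → Bool) → ℝ) (g : (Fin k → Bool) → ℝ)
    (S : Finset (Fin m)) (T : Finset (Fin k)) :
    fourierCoeff (boxMul f g) ((S.disjSum T).map finSumFinEquiv.toEmbedding) =
      fourierCoeff f S * fourierCoeff g T := by
  have split : ∑ x, boxMul f g x * ∏ i ∈ (S.disjSum T).map finSumFinEquiv.toEmbedding, chi (x i) =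
      (∑ a, f a * ∏ i ∈ S, chi (a i)) * ∑ b, g b * ∏ j ∈ T, chi (b j) := by
    rw [← (Fin.appendEquiv m k).sum_comp, sum_mul_sum, Fintype.sum_prod_type]
    refine sum_congr rfl fun a _ => sum_congr rfl fun b _ => ?_
    simp only [boxMul, Fin.appendEquiv, Equiv.coe_fn_mk, prod_map, Equiv.coe_toEmbedding,
      prod_disjSum, finSumFinEquiv_apply_left, finSumFinEquiv_apply_right, Fin.append_left,
      Fin.append_right]
    ring
  simp only [fourierCoeff, split, pow_add]
  ring

theorem fourierCoeff_boxMul_empty (f : (Fin m → Bool) → ℝ) (g : (Fin k → Bool) → ℝ) :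
    fourierCoeff (boxMul f g) ∅ = fourierCoeff f ∅ * fourierCoeff g ∅ := by
  simpa using fourierCoeff_boxMul f g ∅ ∅

theorem fourierCoeff_boxMul_singleton_castAdd (f : (Fin m → Bool) → ℝ) (g : (Fin k → Bool) → ℝ)
    (i : Fin m) :
    fourierCoeff (boxMul f g) {Fin.castAdd k i} = fourierCoeff f {i} * fourierCoeff g ∅ := by
  simpa using fourierCoeff_boxMul f g {i} ∅

theorem fourierCoeff_boxMul_singleton_natAdd (f : (Fin m → Bool) → ℝ) (g : (Fin k → Bool) → ℝ)
    (j : Fin k) :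
    fourierCoeff (boxMul f g) {Fin.natAdd m j} = fourierCoeff f ∅ * fourierCoeff g {j} := by
  simpa using fourierCoeff_boxMul f g ∅ {j}

end FourierCoeff

section NoiseStab

variable {n : ℕ}

theorem fourierWeight_zero (f : (Fin n → Bool) → ℝ) : fourierWeight 0 f = fourierCoeff f ∅ ^ 2 := by
  have level : univ.filter (fun S : Finset (Fin n) => #S = 0) = {∅} := by ext S; simp
  rw [fourierWeight, level, sum_singleton]

open Filter Topology in
theorem eventually_noiseStab_lt {f g : (Fin n → Bool) → ℝ}
    (h₀ : fourierWeight 0 f ≤ fourierWeight 0 g) (h₁ : fourierWeight 1 f < fourierWeight 1 g) :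
    ∀ᶠ ρ in 𝓝[>] (0 : ℝ), noiseStab ρ f < noiseStab ρ g := by
  obtain _ | n := n
  · simp [fourierWeight_one] at h₁
  let tail (h : (Fin (n + 1) → Bool) → ℝ) (ρ : ℝ) : ℝ :=
    ∑ k ∈ range (n + 1), ρ ^ k * fourierWeight (k + 1) h
  have noiseStab_eq (h) (ρ : ℝ) : noiseStab ρ h = ρ * tail h ρ + fourierWeight 0 h := by
    simp only [noiseStab, sum_range_succ' _ (n + 1), tail, mul_sum, pow_succ', mul_assoc, pow_zero,
      one_mul]
  have tail_zero (h) : tail h 0 = fourierWeight 1 h := by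
    simp [tail, sum_range_succ']
  have continuous_tail (h) : Continuous (tail h) := by fun_prop
  have tail_lt : ∀ᶠ ρ in 𝓝 (0 : ℝ), tail f ρ < tail g ρ :=
    (continuous_tail f).continuousAt.eventually_lt (continuous_tail g).continuousAt
      (by simpa only [tail_zero] using h₁)
  filter_upwards [nhdsWithin_le_nhds tail_lt, self_mem_nhdsWithin] with ρ hlt hρ
  rw [noiseStab_eq, noiseStab_eq]
  exact add_lt_add_of_lt_of_le (mul_lt_mul_of_pos_left hlt hρ) h₀

end NoiseStab

section BitSum

variable {n : ℕ}

/-- The vote count `x₁ + ⋯ + xₙ` of a `±1` string. -/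
def bitSum (x : Fin n → Bool) : ℝ := ∑ i, chi (x i)

theorem bitSum_not (x : Fin n → Bool) : bitSum (fun i => !x i) = -bitSum x := by
  simp [bitSum, chi_not]

theorem bitSum_insertNth (i : Fin (n + 1)) (b : Bool) (y : Fin n → Bool) :
    bitSum (i.insertNth b y : Fin (n + 1) → Bool) = chi b + bitSum y := by
  simp [bitSum, Fin.sum_univ_succAbove _ i]

theorem bitSum_eq_intCast (x : Fin n → Bool) :
    bitSum x = ((2 * #{i | x i = true} - n : ℤ) : ℝ) := by
  have chi_eq (b : Bool) : chi b = 2 * (if b = true then 1 else 0) - 1 := by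
    cases b <;> norm_num [chi]
  simp only [bitSum, chi_eq, sum_sub_distrib, ← mul_sum, sum_boole]
  simp

theorem bitSum_ne_zero (hn : Odd n) (x : Fin n → Bool) : bitSum x ≠ 0 := by
  rw [bitSum_eq_intCast, Int.cast_ne_zero]
  grind

theorem abs_bitSum_le (x : Fin n → Bool) : |bitSum x| ≤ n := by
  have abs_chi (b : Bool) : |chi b| = 1 := by cases b <;> simp [chi]
  simpa [bitSum, abs_chi] using abs_sum_le_sum_abs (fun i => chi (x i)) univ

theorem two_le_abs_bitSum (hn : Even n) {x : Fin n → Bool} (hx : bitSum x ≠ 0) :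
    2 ≤ |bitSum x| := by
  rw [bitSum_eq_intCast, Int.cast_ne_zero] at hx
  rw [bitSum_eq_intCast, ← Int.cast_abs]
  exact_mod_cast le_abs.2 (by grind)

theorem card_filter_bitSum_eq_zero (r : ℕ) :
    #{x : Fin (2 * r) → Bool | bitSum x = 0} = r.centralBinom := by
  have balanced_iff (x : Fin (2 * r) → Bool) : bitSum x = 0 ↔ #{i | x i = true} = r := by
    rw [bitSum_eq_intCast, Int.cast_eq_zero]
    omega
  have card_powersetCard : #(powersetCard r (univ : Finset (Fin (2 * r)))) = r.centralBinom := by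
    simp [Nat.centralBinom]
  rw [← card_powersetCard]
  refine card_nbij' (fun x => univ.filter fun i => x i = true) (fun S i => decide (i ∈ S))
    ?_ ?_ ?_ ?_
  · intro x; simp [balanced_iff, mem_powersetCard]
  · intro S; simp [balanced_iff, mem_powersetCard]
  · intro x _; simp
  · intro S _; simp

end BitSum

section Majority

/-- Majority with the value `0` on ties, which makes it odd for every `n`. -/
noncomputable def balancedMaj (n : ℕ) : (Fin n → Bool) → ℝ := fun x => Real.sign (bitSum x)

/-- The indicator function of ties; its Fourier coefficient at `∅` is the probability of a tie. -/
noncomputable def tieIndicator (n : ℕ) : (Fin n → Bool) → ℝ :=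
  fun x => if bitSum x = 0 then 1 else 0

theorem Maj_apply {n : ℕ} (x : Fin n → Bool) : Maj n x = sgn (bitSum x) := rfl

theorem Maj_eq_balancedMaj {n : ℕ} (hn : Odd n) : Maj n = balancedMaj n :=
  funext fun x => sgn_of_ne_zero (bitSum_ne_zero hn x)

theorem fourierCoeff_balancedMaj_empty (n : ℕ) : fourierCoeff (balancedMaj n) ∅ = 0 :=
  fourierCoeff_eq_zero_of_odd (fun x => by simp [balancedMaj, bitSum_not, Real.sign_neg]) (by simp)

theorem fourierCoeff_Maj_empty {n : ℕ} (hn : Odd n) : fourierCoeff (Maj n) ∅ = 0 := by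
  rw [Maj_eq_balancedMaj hn, fourierCoeff_balancedMaj_empty]

theorem fourierCoeff_tieIndicator_of_odd {n : ℕ} (hn : Odd n) (S : Finset (Fin n)) :
    fourierCoeff (tieIndicator n) S = 0 := by
  simp [fourierCoeff, tieIndicator, bitSum_ne_zero hn]

theorem fourierCoeff_tieIndicator_two_mul_empty (r : ℕ) :
    fourierCoeff (tieIndicator (2 * r)) ∅ = r.centralBinom / 4 ^ r := by
  have four_pow : (2 : ℝ) ^ (2 * r) = 4 ^ r := by rw [pow_mul]; norm_num
  simp only [fourierCoeff, tieIndicator, prod_empty, mul_one, sum_boole, card_filter_bitSum_eq_zero,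
    four_pow]
  ring

theorem sign_one_add_sub_sign_neg_one_add (z : ℤ) :
    Real.sign (1 + z) - Real.sign (-1 + z) = 2 * (if (z : ℝ) = 0 then 1 else 0) +
      (if (1 + z : ℝ) = 0 then 1 else 0) + (if (-1 + z : ℝ) = 0 then 1 else 0) := by
  have int_jump : (1 + z).sign - (-1 + z).sign = 2 * (if z = 0 then 1 else 0) +
      (if 1 + z = 0 then 1 else 0) + (if -1 + z = 0 then 1 else 0) := by
    grind [Int.sign_eq_one_of_pos, Int.sign_eq_neg_one_of_neg]
  have sign_right : Real.sign (1 + z) = (1 + z).sign := mod_cast Real.sign_intCast (1 + z)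
  have sign_left : Real.sign (-1 + z) = (-1 + z).sign := mod_cast Real.sign_intCast (-1 + z)
  rw [sign_right, sign_left]
  exact_mod_cast int_jump

theorem fourierCoeff_balancedMaj_singleton (n : ℕ) (i : Fin (n + 1)) :
    fourierCoeff (balancedMaj (n + 1)) {i} =
      fourierCoeff (tieIndicator n) ∅ + fourierCoeff (tieIndicator (n + 1)) ∅ := by
  have jump (y : Fin n → Bool) :
      balancedMaj (n + 1) (i.insertNth true y) - balancedMaj (n + 1) (i.insertNth false y) =
        2 * tieIndicator n y + tieIndicator (n + 1) (i.insertNth true y) +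
          tieIndicator (n + 1) (i.insertNth false y) := by
    simp only [balancedMaj, tieIndicator, bitSum_insertNth, chi, if_true, Bool.false_eq_true,
      if_false]
    rw [bitSum_eq_intCast]
    exact sign_one_add_sub_sign_neg_one_add _
  have sum_jump := sum_congr (rfl : univ = univ) fun y _ => jump y
  simp only [sum_sub_distrib, sum_add_distrib, ← mul_sum] at sum_jump
  rw [fourierCoeff_singleton_eq_insertNth, fourierCoeff_empty_eq_insertNth (tieIndicator (n + 1)) i]
  simp only [fourierCoeff, prod_empty, mul_one]
  linear_combination (1 / 2 ^ n : ℝ) / 2 * sum_jump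

theorem fourierCoeff_balancedMaj_two_mul_singleton (s : ℕ) (i : Fin (2 * s)) :
    fourierCoeff (balancedMaj (2 * s)) {i} = s.centralBinom / 4 ^ s := by
  obtain _ | k := s
  · exact i.elim0
  · rw [← fourierCoeff_tieIndicator_two_mul_empty, ← zero_add (fourierCoeff _ ∅),
      ← fourierCoeff_tieIndicator_of_odd (odd_two_mul_add_one k)]
    exact fourierCoeff_balancedMaj_singleton (2 * k + 1) i

theorem fourierCoeff_Maj_singleton (r : ℕ) (i : Fin (2 * r + 1)) :
    fourierCoeff (Maj (2 * r + 1)) {i} = r.centralBinom / 4 ^ r := by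
  have odd := odd_two_mul_add_one r
  rw [Maj_eq_balancedMaj odd, fourierCoeff_balancedMaj_singleton,
    fourierCoeff_tieIndicator_of_odd odd, add_zero, fourierCoeff_tieIndicator_two_mul_empty]

theorem fourierWeight_one_Maj (r : ℕ) :
    fourierWeight 1 (Maj (2 * r + 1)) = (2 * r + 1) * (r.centralBinom / 4 ^ r : ℝ) ^ 2 := by
  simp [fourierWeight_one, fourierCoeff_Maj_singleton]

end Majority

section GFun

theorem isLTF_gfun (n : ℕ) : IsLTF (gfun n) :=
  ⟨0, fun i => if (i : ℕ) < n - 3 then 2 else 1, fun x => by rw [zero_add, gfun]⟩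

theorem gfun_add_three_apply (m : ℕ) (x : Fin (m + 3) → Bool) :
    gfun (m + 3) x = sgn (2 * bitSum (fun i => x (Fin.castAdd 3 i)) +
      bitSum fun j => x (Fin.natAdd m j)) := by
  simp [gfun, bitSum, Fin.sum_univ_add, mul_sum]

-- For even `m` a nonzero vote of the first `m` bits has size at least 2, hence its double outweighs
-- the three remaining bits, which therefore only break ties.
theorem gfun_add_three_eq_boxMul {m : ℕ} (hm : Even m) :
    gfun (m + 3) = boxMul (balancedMaj m) 1 + boxMul (tieIndicator m) (Maj 3) := by
  funext x
  rw [gfun_add_three_apply]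
  simp only [Pi.add_apply, boxMul, balancedMaj, tieIndicator, Pi.one_apply, mul_one]
  generalize (fun i => x (Fin.castAdd 3 i)) = a
  generalize (fun j => x (Fin.natAdd m j)) = b
  have hb : |bitSum b| ≤ 3 := abs_bitSum_le b
  by_cases ha : bitSum a = 0
  · simp [ha, Maj_apply]
  rw [if_neg ha, zero_mul, add_zero]
  rcases le_abs'.1 (two_le_abs_bitSum hm ha) with h | h
  · rw [sgn_of_neg (by linarith [le_abs_self (bitSum b)]), Real.sign_of_neg (by linarith)]
  · rw [sgn_of_nonneg (by linarith [neg_abs_le (bitSum b)]), Real.sign_of_pos (by linarith)]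

variable (s : ℕ)

theorem fourierCoeff_gfun_empty : fourierCoeff (gfun (2 * s + 3)) ∅ = 0 := by
  rw [gfun_add_three_eq_boxMul (even_two_mul s), fourierCoeff_add, fourierCoeff_boxMul_empty,
    fourierCoeff_boxMul_empty, fourierCoeff_balancedMaj_empty, fourierCoeff_Maj_empty (by decide)]
  ring

theorem fourierCoeff_gfun_singleton_castAdd (i : Fin (2 * s)) :
    fourierCoeff (gfun (2 * s + 3)) {Fin.castAdd 3 i} = s.centralBinom / 4 ^ s := by
  rw [gfun_add_three_eq_boxMul (even_two_mul s), fourierCoeff_add,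
    fourierCoeff_boxMul_singleton_castAdd, fourierCoeff_boxMul_singleton_castAdd,
    fourierCoeff_one_empty, fourierCoeff_Maj_empty (by decide),
    fourierCoeff_balancedMaj_two_mul_singleton]
  ring

theorem fourierCoeff_gfun_singleton_natAdd (j : Fin 3) :
    fourierCoeff (gfun (2 * s + 3)) {Fin.natAdd (2 * s) j} = s.centralBinom / 4 ^ s / 2 := by
  have coeff_Maj_three : fourierCoeff (Maj 3) {j} = 1 / 2 := by
    refine (fourierCoeff_Maj_singleton 1 j).trans ?_
    norm_num [Nat.centralBinom]
  rw [gfun_add_three_eq_boxMul (even_two_mul s), fourierCoeff_add,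
    fourierCoeff_boxMul_singleton_natAdd, fourierCoeff_boxMul_singleton_natAdd,
    fourierCoeff_one_eq_zero_of_odd_card (by simp), coeff_Maj_three,
    fourierCoeff_tieIndicator_two_mul_empty]
  ring

theorem fourierWeight_one_gfun :
    fourierWeight 1 (gfun (2 * s + 3)) = (2 * s + 3 / 4) * (s.centralBinom / 4 ^ s : ℝ) ^ 2 := by
  simp only [fourierWeight_one, Fin.sum_univ_add, fourierCoeff_gfun_singleton_castAdd,
    fourierCoeff_gfun_singleton_natAdd, sum_const, card_univ, Fintype.card_fin, nsmul_eq_mul]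
  push_cast
  ring

theorem fourierWeight_one_gfun_lt (hs : 0 < s) :
    fourierWeight 1 (gfun (2 * s + 3)) < fourierWeight 1 (Maj (2 * s + 3)) := by
  have ratio_lt : (2 * s + 3 / 4 : ℝ) < (2 * s + 3) * ((2 * s + 1) / (2 * s + 2)) ^ 2 := by
    have : (0 : ℝ) < s := mod_cast hs
    rw [div_pow, ← mul_div_assoc, lt_div_iff₀ (by positivity)]
    nlinarith
  have weight_Maj : fourierWeight 1 (Maj (2 * s + 3)) = _ := fourierWeight_one_Maj (s + 1)
  have centralBinom_pos : (0 : ℝ) < s.centralBinom := mod_cast s.centralBinom_pos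
  calc fourierWeight 1 (gfun (2 * s + 3))
      = (2 * s + 3 / 4) * (s.centralBinom / 4 ^ s : ℝ) ^ 2 := fourierWeight_one_gfun s
    _ < (2 * s + 3) * ((2 * s + 1) / (2 * s + 2)) ^ 2 * (s.centralBinom / 4 ^ s : ℝ) ^ 2 := by
      gcongr
    _ = fourierWeight 1 (Maj (2 * s + 3)) := by
      rw [weight_Maj, centralBinom_succ_div_four_pow]
      push_cast
      ring

end GFun

theorem stmt11 (n : ℕ) (hn : Odd n) (h5 : 5 ≤ n) :
    ∃ f : (Fin n → Bool) → ℝ, IsLTF f ∧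
      ∃ ρ : ℝ, 0 < ρ ∧ ρ < 1 ∧ noiseStab ρ f < noiseStab ρ (Maj n) := by
  obtain ⟨s, hs, rfl⟩ : ∃ s, 0 < s ∧ n = 2 * s + 3 := by
    obtain ⟨t, rfl⟩ := hn
    exact ⟨t - 1, by omega, by omega⟩
  have weight_zero_le : fourierWeight 0 (gfun (2 * s + 3)) ≤ fourierWeight 0 (Maj (2 * s + 3)) := by
    rw [fourierWeight_zero, fourierWeight_zero, fourierCoeff_gfun_empty, zero_pow two_ne_zero]
    positivity
  have small := Ioo_mem_nhdsGT (zero_lt_one' ℝ)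
  obtain ⟨ρ, stab_lt, hρ⟩ :=
    ((eventually_noiseStab_lt weight_zero_le (fourierWeight_one_gfun_lt s hs)).and small).exists
  exact ⟨gfun (2 * s + 3), isLTF_gfun _, ρ, hρ.1, hρ.2, stab_lt⟩

end BKS
end
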